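/- arXiv:1203.4910 — 2 statements merged into one kernel-verified Lean document; each statement's English description precedes it below -/
import Mathlib

section
/- Let u : ℝ² → ℝ be three times continuously differentiable with all third-order partial derivatives bounded in absolute value by K on the closed ball of radius 2h centered at (x,y), where h > 0. Set f = −(1/2)Δu(x,y) and g = −(1/2)(∂u/∂x)(x,y). Then | u(x,y) − [ 2u(x+h, y) + u(x, y+h) + u(x, y−h) ] / 4 − (h²/2) f − h g | ≤ K h³. -/
/-!
Along each of the three segments from `(x, y)` to `(x + h, y)`, `(x, y + h)`, `(x, y - h)`, the
function `u` has a second-order Taylor expansion with remainder at most `K * h ^ 3`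
(`segment_taylor`). In the average with weights `1/2, 1/4, 1/4`, the two first-order terms in `±y`
cancel, the first-order term in `x` is `-h * g`, and the second-order terms add up to
`-h ^ 2 / 2 * f`. The three remainders therefore contribute at most
`(1/2 + 1/4 + 1/4) * K * h ^ 3`; the sharper Taylor constant `1/6` is not needed.
-/

open MeasureTheory

/-- One integration of an estimate: if `φ'` deviates from `q'` by at most `C` on `[0, h]` and
`φ`, `q` agree at `0`, then they differ by at most `C * h` on `[0, h]`. -/
lemma abs_sub_le_of_deriv {φ φ' q q' : ℝ → ℝ} {h C : ℝ}
    (hφ : ∀ t ∈ Set.Icc 0 h, HasDerivWithinAt φ (φ' t) (Set.Icc 0 h) t)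
    (hq : ∀ t, HasDerivAt q (q' t) t) (h0 : φ 0 = q 0) (hC : 0 ≤ C)
    (hb : ∀ t ∈ Set.Icc 0 h, |φ' t - q' t| ≤ C) :
    ∀ t ∈ Set.Icc 0 h, |φ t - q t| ≤ C * h := by
  intro t ht
  have key := norm_image_sub_le_of_norm_deriv_le_segment' (f := fun t => φ t - q t)
    (fun s hs => (hφ s hs).sub (hq s).hasDerivWithinAt)
    (fun s hs => hb s (Set.Ico_subset_Icc_self hs)) t ht
  simp only [h0, sub_self, sub_zero, Real.norm_eq_abs] at key
  exact key.trans (mul_le_mul_of_nonneg_left ht.2 hC)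

/-- The derivative of `D^n u (c + t v) (v, …, v)` along a segment is
`D^(n+1) u (c + t v) (v, …, v)`. Derivatives are taken within `s`, so the segment may touch
the boundary of `s`. -/
lemma hasDerivWithinAt_iterated {u : ℝ × ℝ → ℝ} {s : Set (ℝ × ℝ)} (hs : UniqueDiffOn ℝ s)
    (hu : ContDiffOn ℝ 3 u s) {c v : ℝ × ℝ} {h : ℝ}
    (hseg : ∀ t ∈ Set.Icc 0 h, c + t • v ∈ s) (n : ℕ) (hn : n < 3) (t : ℝ)
    (ht : t ∈ Set.Icc 0 h) :
    HasDerivWithinAt (fun t : ℝ => iteratedFDerivWithin ℝ n u s (c + t • v) (fun _ => v))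
      (iteratedFDerivWithin ℝ (n + 1) u s (c + t • v) (fun _ => v)) (Set.Icc 0 h) t := by
  have hd := ((hu.differentiableOn_iteratedFDerivWithin (m := n) (by exact_mod_cast hn) hs)
    _ (hseg t ht)).hasFDerivWithinAt
  have hl : HasDerivWithinAt (fun t : ℝ => c + t • v) v (Set.Icc 0 h) t := by
    simpa using ((hasDerivWithinAt_id t (Set.Icc 0 h)).smul_const v).const_add c
  have hc := hd.comp_hasDerivWithinAt t hl hseg
  have ha := (ContinuousMultilinearMap.apply ℝ (fun _ : Fin n => ℝ × ℝ) ℝ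
    (fun _ => v)).hasFDerivAt.comp_hasDerivWithinAt t hc
  rw [iteratedFDerivWithin_succ_apply_left]
  exact ha

/-- Second-order Taylor expansion along the segment from `c` to `c + h v`. -/
lemma segment_taylor {u : ℝ × ℝ → ℝ} {s : Set (ℝ × ℝ)} (hs : UniqueDiffOn ℝ s)
    (hu : ContDiffOn ℝ 3 u s) {c v : ℝ × ℝ} {h K : ℝ} (hh : 0 < h)
    (hseg : ∀ t ∈ Set.Icc 0 h, c + t • v ∈ s)
    (hK : ∀ p ∈ s, |iteratedFDerivWithin ℝ 3 u s p (fun _ => v)| ≤ K) :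
    |u (c + h • v) - (u c + h * fderivWithin ℝ u s c v
      + h ^ 2 / 2 * iteratedFDerivWithin ℝ 2 u s c (fun _ => v))| ≤ K * h ^ 3 := by
  have hc : c ∈ s := by simpa using hseg 0 ⟨le_rfl, hh.le⟩
  have hK0 : 0 ≤ K := (abs_nonneg _).trans (hK c hc)
  have hD := hasDerivWithinAt_iterated hs hu hseg
  set a₀ := iteratedFDerivWithin ℝ 0 u s c (fun _ => v) with ha₀
  set a₁ := iteratedFDerivWithin ℝ 1 u s c (fun _ => v) with ha₁
  set a₂ := iteratedFDerivWithin ℝ 2 u s c (fun _ => v) with ha₂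
  have h2 := abs_sub_le_of_deriv (q := fun _ => a₂) (q' := fun _ => 0) (hD 2 (by norm_num))
    (fun t => hasDerivAt_const t a₂) (by simp [ha₂]) hK0
    (fun t ht => by simpa using hK _ (hseg t ht))
  have h1 := abs_sub_le_of_deriv (q := fun t => a₁ + t * a₂) (q' := fun _ => a₂)
    (hD 1 (by norm_num))
    (fun t => by simpa using ((hasDerivAt_id t).mul_const a₂).const_add a₁)
    (by simp [ha₁]) (by positivity) h2
  have h0 := abs_sub_le_of_deriv (q := fun t => a₀ + t * a₁ + t ^ 2 / 2 * a₂)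
    (q' := fun t => a₁ + t * a₂) (hD 0 (by norm_num))
    (fun t => by
      have e := (((hasDerivAt_id t).mul_const a₁).const_add a₀).add
        ((((hasDerivAt_id t).pow 2).div_const 2).mul_const a₂)
      exact e.congr_deriv (by norm_num))
    (by simp [ha₀]) (by positivity) h1 h ⟨hh.le, le_rfl⟩
  have e₁ : a₁ = fderivWithin ℝ u s c v := by
    rw [ha₁, iteratedFDerivWithin_one_apply (hs c hc)]
  simp only [iteratedFDerivWithin_zero_apply, ha₀, e₁] at h0
  calc _ ≤ K * h * h * h := h0
    _ = K * h ^ 3 := by ring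

/-- Order-three finite differences replacement scheme at a vertical Neumann
boundary point. If `u` is C³ on the closed ball of radius `2h` around `(x,y)` with all third
order partial derivatives bounded by `K` there, `f = -(1/2)Δu(x,y)` and `g = -(1/2)∂u/∂x(x,y)`,
then `|u(x,y) − [2u(x+h,y) + u(x,y+h) + u(x,y−h)]/4 − (h²/2) f − h g| ≤ K h³`. -/
theorem stmt7 (u : ℝ × ℝ → ℝ) (x y h : ℝ) (hh : 0 < h) (K : ℝ)
    (hu : ContDiffOn ℝ 3 u (Metric.closedBall ((x, y) : ℝ × ℝ) (2 * h)))
    (hK : ∀ p ∈ Metric.closedBall ((x, y) : ℝ × ℝ) (2 * h), ∀ v₁ v₂ v₃ : ℝ × ℝ,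
      v₁ ∈ ({(1, 0), (0, 1)} : Set (ℝ × ℝ)) → v₂ ∈ ({(1, 0), (0, 1)} : Set (ℝ × ℝ)) →
      v₃ ∈ ({(1, 0), (0, 1)} : Set (ℝ × ℝ)) →
      |iteratedFDerivWithin ℝ 3 u (Metric.closedBall ((x, y) : ℝ × ℝ) (2 * h)) p
        ![v₁, v₂, v₃]| ≤ K)
    (f g : ℝ)
    (hf : f = -(1 / 2) *
      (iteratedFDerivWithin ℝ 2 u (Metric.closedBall ((x, y) : ℝ × ℝ) (2 * h)) (x, y)
          ![(1, 0), (1, 0)] +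
        iteratedFDerivWithin ℝ 2 u (Metric.closedBall ((x, y) : ℝ × ℝ) (2 * h)) (x, y)
          ![(0, 1), (0, 1)]))
    (hg : g = -(1 / 2) *
      fderivWithin ℝ u (Metric.closedBall ((x, y) : ℝ × ℝ) (2 * h)) (x, y) (1, 0)) :
    |u (x, y) - (2 * u (x + h, y) + u (x, y + h) + u (x, y - h)) / 4 -
      h ^ 2 / 2 * f - h * g| ≤ K * h ^ 3 := by
  set s := Metric.closedBall ((x, y) : ℝ × ℝ) (2 * h) with hs_def
  have hs : UniqueDiffOn ℝ s := by
    refine uniqueDiffOn_convex (convex_closedBall _ _) ⟨(x, y), ?_⟩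
    exact Metric.ball_subset_interior_closedBall (Metric.mem_ball_self (by positivity))
  have hseg : ∀ v : ℝ × ℝ, ‖v‖ ≤ 1 → ∀ t ∈ Set.Icc 0 h, (x, y) + t • v ∈ s := by
    intro v hv t ht
    rw [hs_def, mem_closedBall_iff_norm, add_sub_cancel_left, norm_smul, Real.norm_eq_abs,
      abs_of_nonneg ht.1]
    nlinarith [ht.1, ht.2, norm_nonneg v]
  have c2 : ∀ v : ℝ × ℝ, (fun _ : Fin 2 => v) = ![v, v] := fun v => by
    ext i <;> fin_cases i <;> rfl
  have c3 : ∀ v : ℝ × ℝ, (fun _ : Fin 3 => v) = ![v, v, v] := fun v => by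
    ext i <;> fin_cases i <;> rfl
  -- Even and odd multilinear forms on the diagonal are even and odd functions.
  have n2 : ∀ (p v : ℝ × ℝ), iteratedFDerivWithin ℝ 2 u s p (fun _ => -v) =
      iteratedFDerivWithin ℝ 2 u s p (fun _ => v) := fun p v => by
    simpa using (iteratedFDerivWithin ℝ 2 u s p).map_smul_univ (fun _ => (-1 : ℝ)) (fun _ => v)
  have n3 : ∀ (p v : ℝ × ℝ), iteratedFDerivWithin ℝ 3 u s p (fun _ => -v) =
      -iteratedFDerivWithin ℝ 3 u s p (fun _ => v) := fun p v => by
    have := (iteratedFDerivWithin ℝ 3 u s p).map_smul_univ (fun _ => (-1 : ℝ)) (fun _ => v)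
    norm_num at this
    exact this
  have tE := segment_taylor hs hu (v := (1, 0)) (K := K) hh (hseg _ (by simp [Prod.norm_def]))
    (fun p hp => by rw [c3]; exact hK p hp _ _ _ (by simp) (by simp) (by simp))
  have hKy : ∀ p ∈ s, |iteratedFDerivWithin ℝ 3 u s p (fun _ => (0, 1))| ≤ K :=
    fun p hp => by rw [c3]; exact hK p hp _ _ _ (by simp) (by simp) (by simp)
  have tN := segment_taylor hs hu (v := (0, 1)) (K := K) hh (hseg _ (by simp [Prod.norm_def])) hKy
  have tS := segment_taylor hs hu (v := -(0, 1)) (K := K) hh (hseg _ (by simp [Prod.norm_def]))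
    (fun p hp => by rw [n3, abs_neg]; exact hKy p hp)
  rw [n2, map_neg] at tS
  rw [c2] at tE tN tS
  have pE : (x, y) + h • ((1, 0) : ℝ × ℝ) = (x + h, y) := by simp
  have pN : (x, y) + h • ((0, 1) : ℝ × ℝ) = (x, y + h) := by simp
  have pS : (x, y) + h • (-(0, 1) : ℝ × ℝ) = (x, y - h) := by simp [sub_eq_add_neg]
  rw [pE] at tE
  rw [pN] at tN
  rw [pS] at tS
  rw [abs_le] at tE tN tS ⊢
  subst hf hg
  constructor <;> linarith [tE.1, tE.2, tN.1, tN.2, tS.1, tS.2]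
end

section
/- Let u : ℝ² → ℝ be three times continuously differentiable with all third-order partial derivatives bounded in absolute value by K on the closed ball of radius 3h centered at (x,y), where h > 0. Set f(x+h,y) = −(1/2)Δu(x+h,y) and g = −(1/2)(∂u/∂x)(x,y). Then | u(x,y) − 2 g h − f(x+h,y) h² − [ u(x+h, y+h) + u(x+h, y−h) ] / 2 | ≤ 4 K h³. -/
/-!
Along the horizontal segment from `(x, y)` to `(x + h, y)` and along the two vertical segments
from `(x + h, y)` to `(x + h, y ± h)`, the function `u` has a second order Taylor expansion with
remainder at most `K h³` (`taylor_segment`, a crude constant obtained by applying the mean value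
inequality three times). In the symmetric vertical average the first order terms cancel and the
second order ones give `h² ∂²u/∂y² / 2`; in the horizontal expansion, moving the second derivative
`∂²u/∂x²` from `(x, y)` to `(x + h, y)` costs at most `K h³ / 2`. The total error is thus
at most `(1 + 1 + 1/2) K h³ ≤ 4 K h³`.
-/

/-- Crude second order Taylor estimate on `[0, 1]`: `F` lists a function and its first three
derivatives. -/
lemma taylor_unit (F : ℕ → ℝ → ℝ) (C : ℝ)
    (hF : ∀ n < 3, ∀ t ∈ Set.Icc (0 : ℝ) 1,
      HasDerivWithinAt (F n) (F (n + 1) t) (Set.Icc 0 1) t)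
    (hC : ∀ t ∈ Set.Icc (0 : ℝ) 1, |F 3 t| ≤ C) :
    |F 2 1 - F 2 0| ≤ C ∧ |F 0 1 - F 0 0 - F 1 0 - F 2 0 / 2| ≤ C := by
  have h1 : (1 : ℝ) ∈ Set.Icc (0 : ℝ) 1 := by simp
  have hC0 : 0 ≤ C := (abs_nonneg _).trans (hC 1 h1)
  have e2 : ∀ t ∈ Set.Icc (0 : ℝ) 1, |F 2 t - F 2 0| ≤ C := fun t ht => by
    have := norm_image_sub_le_of_norm_deriv_le_segment' (hF 2 (by norm_num))
      (fun s hs => hC s (Set.Ico_subset_Icc_self hs)) t ht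
    rw [Real.norm_eq_abs] at this
    nlinarith [ht.1, ht.2]
  have e1 : ∀ t ∈ Set.Icc (0 : ℝ) 1, |F 1 t - F 1 0 - t * F 2 0| ≤ C := fun t ht => by
    have := norm_image_sub_le_of_norm_deriv_le_segment'
      (f := fun t => F 1 t - t * F 2 0) (f' := fun t => F 2 t - F 2 0) (a := 0) (b := 1)
      (fun s hs => by
        have := (hF 1 (by norm_num) s hs).sub ((hasDerivWithinAt_id s _).mul_const (F 2 0))
        rw [one_mul] at this
        exact this)
      (fun s hs => e2 s (Set.Ico_subset_Icc_self hs)) t ht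
    rw [Real.norm_eq_abs,
      show F 1 t - t * F 2 0 - (F 1 0 - 0 * F 2 0) = F 1 t - F 1 0 - t * F 2 0 by ring] at this
    nlinarith [ht.1, ht.2]
  refine ⟨e2 1 h1, ?_⟩
  have := norm_image_sub_le_of_norm_deriv_le_segment'
    (f := fun t => F 0 t - t * F 1 0 - t ^ 2 * (F 2 0 / 2))
    (f' := fun t => F 1 t - F 1 0 - t * F 2 0) (a := 0) (b := 1)
    (fun s hs => by
      have := ((hF 0 (by norm_num) s hs).sub ((hasDerivWithinAt_id s _).mul_const (F 1 0))).sub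
        (((hasDerivWithinAt_id s _).pow 2).mul_const (F 2 0 / 2))
      refine HasDerivWithinAt.congr_deriv this ?_
      simp
      ring)
    (fun s hs => e1 s (Set.Ico_subset_Icc_self hs)) 1 h1
  rw [Real.norm_eq_abs] at this
  convert this using 2 <;> ring

/-- Taylor estimate for a `C³` function on the segment from `p` to `p + δ • e`, together with the
variation of the second derivative along it. All derivatives are taken within `S`. -/
lemma taylor_segment {u : ℝ × ℝ → ℝ} {S : Set (ℝ × ℝ)} (hS : UniqueDiffOn ℝ S)
    (hu : ContDiffOn ℝ 3 u S) (p e : ℝ × ℝ) (δ K : ℝ)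
    (hseg : ∀ t ∈ Set.Icc (0 : ℝ) 1, p + (t * δ) • e ∈ S)
    (hK : ∀ q ∈ S, |iteratedFDerivWithin ℝ 3 u S q (fun _ => e)| ≤ K) :
    |δ ^ 2 * iteratedFDerivWithin ℝ 2 u S (p + δ • e) (fun _ => e)
        - δ ^ 2 * iteratedFDerivWithin ℝ 2 u S p (fun _ => e)| ≤ |δ| ^ 3 * K ∧
    |u (p + δ • e) - u p - δ * fderivWithin ℝ u S p e
        - δ ^ 2 * iteratedFDerivWithin ℝ 2 u S p (fun _ => e) / 2| ≤ |δ| ^ 3 * K := by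
  have key := taylor_unit
    (fun n t => δ ^ n * iteratedFDerivWithin ℝ n u S (p + (t * δ) • e) (fun _ => e))
    (|δ| ^ 3 * K) (fun n hn t ht => by
      have hT := (hu.ftaylorSeriesWithin hS).fderivWithin n (by exact_mod_cast hn) _ (hseg t ht)
      have hl : HasDerivWithinAt (fun t : ℝ => p + (t * δ) • e) (δ • e) (Set.Icc 0 1) t := by
        simpa using
          (((hasDerivWithinAt_id t (Set.Icc (0 : ℝ) 1)).mul_const δ).smul_const e).const_add p
      have hc := hT.comp_hasDerivWithinAt t hl hseg
      have ha := ((ContinuousMultilinearMap.apply ℝ (fun _ : Fin n => ℝ × ℝ) ℝ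
        (fun _ => e)).hasFDerivAt.comp_hasDerivWithinAt t hc).const_mul (δ ^ n)
      refine HasDerivWithinAt.congr_deriv ha ?_
      have hcons : (Fin.cons e (fun _ => e) : Fin (n + 1) → ℝ × ℝ) = fun _ => e := by
        funext i
        refine Fin.cases ?_ (fun _ => ?_) i <;> simp
      simp only [map_smul, smul_eq_mul,
        ContinuousMultilinearMap.apply_apply, ContinuousMultilinearMap.curryLeft_apply,
        ftaylorSeriesWithin]
      erw [hcons]
      ring)
    (fun t ht => by
      rw [abs_mul, abs_pow]
      exact mul_le_mul_of_nonneg_left (hK _ (hseg t ht)) (by positivity))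
  have hp : p ∈ S := by simpa using hseg 0 (by simp)
  simpa [iteratedFDerivWithin_one_apply (hS p hp)] using key

/-- Forward order-three finite differences scheme for a Neumann boundary point.
If `u` is C³ on the closed ball of radius `3h` around `(x,y)` with all third order partial
derivatives bounded by `K` there, `f = -(1/2)Δu(x+h,y)` and `g = -(1/2)∂u/∂x(x,y)`, then
`|u(x,y) − 2gh − f h² − [u(x+h,y+h) + u(x+h,y−h)]/2| ≤ 4K h³`. -/
theorem stmt8 (u : ℝ × ℝ → ℝ) (x y h : ℝ) (hh : 0 < h) (K : ℝ)
    (hu : ContDiffOn ℝ 3 u (Metric.closedBall ((x, y) : ℝ × ℝ) (3 * h)))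
    (hK : ∀ p ∈ Metric.closedBall ((x, y) : ℝ × ℝ) (3 * h), ∀ v₁ v₂ v₃ : ℝ × ℝ,
      v₁ ∈ ({(1, 0), (0, 1)} : Set (ℝ × ℝ)) → v₂ ∈ ({(1, 0), (0, 1)} : Set (ℝ × ℝ)) →
      v₃ ∈ ({(1, 0), (0, 1)} : Set (ℝ × ℝ)) →
      |iteratedFDerivWithin ℝ 3 u (Metric.closedBall ((x, y) : ℝ × ℝ) (3 * h)) p
        ![v₁, v₂, v₃]| ≤ K)
    (f g : ℝ)
    (hf : f = -(1 / 2) *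
      (iteratedFDerivWithin ℝ 2 u (Metric.closedBall ((x, y) : ℝ × ℝ) (3 * h)) (x + h, y)
          ![(1, 0), (1, 0)] +
        iteratedFDerivWithin ℝ 2 u (Metric.closedBall ((x, y) : ℝ × ℝ) (3 * h)) (x + h, y)
          ![(0, 1), (0, 1)]))
    (hg : g = -(1 / 2) *
      fderivWithin ℝ u (Metric.closedBall ((x, y) : ℝ × ℝ) (3 * h)) (x, y) (1, 0)) :
    |u (x, y) - 2 * g * h - f * h ^ 2 -
      (u (x + h, y + h) + u (x + h, y - h)) / 2| ≤ 4 * K * h ^ 3 := by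
  set S := Metric.closedBall ((x, y) : ℝ × ℝ) (3 * h) with hSdef
  have hS : UniqueDiffOn ℝ S := by
    refine uniqueDiffOn_convex (convex_closedBall _ _) ⟨(x, y), ?_⟩
    exact Metric.ball_subset_interior_closedBall (Metric.mem_ball_self (by positivity))
  -- The norm of `ℝ × ℝ` is the sup norm.
  have hmem : ∀ a b : ℝ, |a| ≤ 3 * h → |b| ≤ 3 * h → (x + a, y + b) ∈ S := fun a b ha hb => by
    simp [hSdef, Metric.mem_closedBall, Prod.dist_eq, ha, hb]
  have h0 : |(0 : ℝ)| ≤ 3 * h := by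
    rw [abs_zero]
    positivity
  have c2 : ∀ v : ℝ × ℝ, (![v, v] : Fin 2 → ℝ × ℝ) = fun _ => v := fun v => by
    funext i; fin_cases i <;> rfl
  have c3 : ∀ v : ℝ × ℝ, (![v, v, v] : Fin 3 → ℝ × ℝ) = fun _ => v := fun v => by
    funext i; fin_cases i <;> rfl
  have hb : ∀ e ∈ ({(1, 0), (0, 1)} : Set (ℝ × ℝ)), ∀ q ∈ S,
      |iteratedFDerivWithin ℝ 3 u S q (fun _ => e)| ≤ K := fun e he q hq => by
    rw [← c3]
    exact hK q hq e e e he he he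
  have hK0 : 0 ≤ K :=
    (abs_nonneg _).trans (hb (1, 0) (by simp) (x, y) (by simpa using hmem 0 0 h0 h0))
  have hth : ∀ t ∈ Set.Icc (0 : ℝ) 1, |t * h| ≤ 3 * h := fun t ht => by
    rw [abs_of_nonneg (mul_nonneg ht.1 hh.le)]
    nlinarith [ht.1, ht.2]
  have hh3 : |h| ≤ 3 * h := by rw [abs_of_pos hh]; linarith
  obtain ⟨H1, H2⟩ := taylor_segment hS hu (x, y) (1, 0) h K
    (fun t ht => by simpa using hmem (t * h) 0 (hth t ht) h0)
    (hb _ (by simp))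
  obtain ⟨-, H3⟩ := taylor_segment hS hu (x + h, y) (0, 1) h K
    (fun t ht => by simpa using hmem h (t * h) hh3 (hth t ht))
    (hb _ (by simp))
  obtain ⟨-, H4⟩ := taylor_segment hS hu (x + h, y) (0, 1) (-h) K
    (fun t ht => by simpa using hmem h (-(t * h)) hh3 (by rw [abs_neg]; exact hth t ht))
    (hb _ (by simp))
  have hKh : 0 ≤ h ^ 3 * K := by positivity
  rw [c2, c2] at hf
  simp only [Prod.smul_mk, smul_eq_mul, mul_one, mul_zero, Prod.mk_add_mk, add_zero, abs_neg,
    abs_of_pos hh, ← sub_eq_add_neg, neg_mul, sub_neg_eq_add, neg_sq] at H1 H2 H3 H4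
  rw [abs_le] at H1 H2 H3 H4 ⊢
  subst hf hg
  constructor <;> linarith [H1.1, H1.2, H2.1, H2.2, H3.1, H3.2, H4.1, H4.2]
end
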